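/- Fix a positive integer d and ℓ = (ℓ_1,...,ℓ_n) ∈ ℕ^n. There exists a nonzero squarefree strongly stable ideal I in K[x_1,...,x_{n+d-1}] generated in degree d with ℓ*(I) = ℓ if and only if ℓ is an M-vector with ℓ_2 ≤ d. -/

import Mathlib

set_option synthInstance.maxHeartbeats 1000000
set_option maxHeartbeats 1000000

open MvPolynomial

namespace Paper

/-! ### Combinatorics of monomials -/

/-- a monomial in `n` variables, encoded by its exponent vector -/
abbrev Mono (n : ℕ) := Fin n →₀ ℕ

/-- total degree of a monomial -/
def mdeg {n : ℕ} (u : Mono n) : ℕ := u.sum fun _ e => e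

/-- `maxVar u` is the largest index (1-indexed) of a variable dividing `u`; `maxVar 1 = 0`. -/
def maxVar {n : ℕ} (u : Mono n) : ℕ := u.support.sup fun i => (i : ℕ) + 1

/-- `LexGT u v` : `u >_lex v` (lexicographic order with `x_1 > x_2 > ⋯ > x_n`). -/
def LexGT {n : ℕ} (u v : Mono n) : Prop :=
  ∃ i : Fin n, v i < u i ∧ ∀ j : Fin n, j < i → u j = v j

/-- strongly stable set of monomials -/
def SStableSet {n : ℕ} (V : Set (Mono n)) : Prop :=
  ∀ u : Mono n, ∀ p q : Fin n, p < q → u + Finsupp.single q 1 ∈ V →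
    u + Finsupp.single p 1 ∈ V

/-- `Dk V k = { u / x_k : u ∈ V, max(u) = k }` (here `k : Fin n` is the 0-indexed variable,
corresponding to the 1-indexed variable `k+1`) -/
def Dk {n : ℕ} (V : Set (Mono n)) (k : Fin n) : Set (Mono n) :=
  {w | w + Finsupp.single k 1 ∈ V ∧ maxVar (w + Finsupp.single k 1) = (k : ℕ) + 1}

/-- `Mle j W = { u ∈ W : max(u) ≤ j }` -/
def Mle {n : ℕ} (j : ℕ) (W : Set (Mono n)) : Set (Mono n) := {u ∈ W | maxVar u ≤ j}

/-- `L` is a lexsegment set of monomials inside `K[x_1,…,x_k]`. -/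
def LexSegIn {n : ℕ} (k : ℕ) (L : Set (Mono n)) : Prop :=
  (∀ u ∈ L, maxVar u ≤ k) ∧
  ∀ u ∈ L, ∀ v : Mono n, mdeg v = mdeg u → maxVar v ≤ k → LexGT v u → v ∈ L

/-- `V` is a `d`-linear lexsegment set of monomials of degree `d`. -/
def DLinearLexSeg {n : ℕ} (d : ℕ) (V : Set (Mono n)) : Prop :=
  (∀ u ∈ V, mdeg u = d) ∧ SStableSet V ∧
    ∀ k : Fin n, LexSegIn ((k : ℕ) + 1) (Dk V k)

/-! ### Ideal-level notions -/

variable {n : ℕ} {K : Type} [Field K]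

/-- `I` is a monomial ideal. -/
def MonomialIdeal (I : Ideal (MvPolynomial (Fin n) K)) : Prop :=
  ∀ p ∈ I, ∀ m ∈ p.support, (monomial m (1 : K)) ∈ I

/-- `u` is a minimal monomial generator of the monomial ideal `I`. -/
def MinGen (I : Ideal (MvPolynomial (Fin n) K)) (u : Mono n) : Prop :=
  monomial u (1 : K) ∈ I ∧ ∀ v : Mono n, v ≤ u → v ≠ u → monomial v (1 : K) ∉ I

/-- stable monomial ideal -/
def StableIdeal (I : Ideal (MvPolynomial (Fin n) K)) : Prop :=
  MonomialIdeal I ∧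
  ∀ u : Mono n, ∀ q : Fin n, maxVar u = (q : ℕ) + 1 → monomial u (1 : K) ∈ I →
    ∀ p : Fin n, p < q →
      monomial (u - Finsupp.single q 1 + Finsupp.single p 1) (1 : K) ∈ I

/-- strongly stable monomial ideal -/
def SStableIdeal (I : Ideal (MvPolynomial (Fin n) K)) : Prop :=
  MonomialIdeal I ∧
  ∀ u : Mono n, ∀ q : Fin n, 0 < u q → monomial u (1 : K) ∈ I →
    ∀ p : Fin n, p < q →
      monomial (u - Finsupp.single q 1 + Finsupp.single p 1) (1 : K) ∈ I

/-- the set of (exponent vectors of) monomials of degree `k` lying in `I` -/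
def monSlice (I : Ideal (MvPolynomial (Fin n) K)) (k : ℕ) : Set (Mono n) :=
  {u | mdeg u = k ∧ monomial u (1 : K) ∈ I}

/-- homogeneous (graded) ideal -/
def HomIdeal (I : Ideal (MvPolynomial (Fin n) K)) : Prop :=
  ∀ p ∈ I, ∀ k : ℕ, homogeneousComponent k p ∈ I

/-! ### Graded components and Hilbert functions -/

/-- the degree-`z` homogeneous component of `I`, as a `K`-subspace -/
noncomputable def hComp (I : Ideal (MvPolynomial (Fin n) K)) (z : ℤ) :
    Submodule K (MvPolynomial (Fin n) K) :=
  if 0 ≤ z then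
    (Submodule.restrictScalars K I) ⊓ homogeneousSubmodule (Fin n) K z.toNat
  else ⊥

/-- Hilbert function `H(I,t)` of the ideal `I` -/
noncomputable def hfI (I : Ideal (MvPolynomial (Fin n) K)) (t : ℕ) : ℕ :=
  Module.finrank K (hComp I (t : ℤ))

/-- Hilbert function `H(S/I,t)` of the quotient `S/I` -/
noncomputable def hfQ (I : Ideal (MvPolynomial (Fin n) K)) (t : ℕ) : ℕ :=
  Module.finrank K
    (homogeneousSubmodule (Fin n) K t ⧸
      Submodule.comap (homogeneousSubmodule (Fin n) K t).subtype
        (Submodule.restrictScalars K I))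

/-- squarefree exponent vector -/
def SqFree {n : ℕ} (u : Mono n) : Prop := ∀ i, u i ≤ 1

/-- squarefree monomial ideal -/
def SqMonomialIdeal (I : Ideal (MvPolynomial (Fin n) K)) : Prop :=
  MonomialIdeal I ∧ ∀ u : Mono n, MinGen I u → SqFree u

/-- squarefree strongly stable ideal -/
def SqSStableIdeal (I : Ideal (MvPolynomial (Fin n) K)) : Prop :=
  SqMonomialIdeal I ∧
  ∀ u : Mono n, SqFree u → monomial u (1 : K) ∈ I →
    ∀ p q : Fin n, p < q → u q = 1 → u p = 0 →
      monomial (u - Finsupp.single q 1 + Finsupp.single p 1) (1 : K) ∈ I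

/-! ### Macaulay operators and M-vectors -/

/-- Macaulay upper operator `a^{⟨t⟩}` (`macUp t a`):
if `a = C(a_t,t) + ⋯ + C(a_j,j)` is the `t`-th Macaulay representation then
`a^{⟨t⟩} = C(a_t+1,t+1) + ⋯ + C(a_j+1,j+1)`; also `0^{⟨t⟩} = 0`. -/
noncomputable def macUp : ℕ → ℕ → ℕ
  | 0, _ => 0
  | _ + 1, 0 => 0
  | (t + 1), (a + 1) =>
    let c := sSup {c : ℕ | Nat.choose c (t + 1) ≤ a + 1}
    Nat.choose (c + 1) (t + 2) + macUp t ((a + 1) - Nat.choose c (t + 1))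

/-- Macaulay operator `a^{(t)}` (`macSq t a`):
if `a = C(a_t,t) + ⋯ + C(a_j,j)` is the `t`-th Macaulay representation then
`a^{(t)} = C(a_t+1,t) + ⋯ + C(a_j+1,j)`; also `0^{(t)} = 0`. -/
noncomputable def macSq : ℕ → ℕ → ℕ
  | 0, _ => 0
  | _ + 1, 0 => 0
  | (t + 1), (a + 1) =>
    let c := sSup {c : ℕ | Nat.choose c (t + 1) ≤ a + 1}
    Nat.choose (c + 1) (t + 1) + macSq t ((a + 1) - Nat.choose c (t + 1))

/-- `(ℓ 0, ℓ 1, …, ℓ (n-1)) = (h_0,…,h_{n-1})` is an M-vector: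
`h_0 = 1` and `h_{t+1} ≤ h_t^{⟨t⟩}` for all `t ≥ 1`. -/
def MVector {n : ℕ} (ℓ : Fin n → ℕ) : Prop :=
  (∀ h0 : 0 < n, ℓ ⟨0, h0⟩ = 1) ∧
  ∀ t : ℕ, 1 ≤ t → ∀ (h1 : t < n) (h2 : t + 1 < n),
    ℓ ⟨t + 1, h2⟩ ≤ macUp t (ℓ ⟨t, h1⟩)

/-!
Write `d = e + 1`. A squarefree strongly stable ideal generated in degree `d` is the same thing as
a shifted family of `d`-sets, and its generators `u` with `max(u) = k + d` (`k` counted from `0`)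
correspond to the `e`-subsets `T` of `{0, …, k + e - 1}` for which `T ∪ {k + e}` is in the family.
Shiftedness of the family amounts to shiftedness of these top links `A k`, together with the
requirement that the members of `A (k + 1)` not containing `k + e` lie in `A k`. Clearly
`#(A 0) = 1`, and `#(A 1) ≤ d` because a set with `d` elements has only `d` subsets of size `e`.

Necessity: deleting and linking the last vertex splits the inequality
`#(A (k + 1)) ≤ (#(A k))^{⟨k⟩}` into two smaller instances, which the Pascal recursion of the
Macaulay operator puts together again.

Sufficiency: let `A k` be the initial lexicographic segment of the prescribed size,
which is long enough because `ℓ_2 ≤ d` and the Macaulay operator takes binomial coefficients to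
binomial coefficients. The position of a set in the lexicographic order is read off the complement
of the set as a sum of binomial coefficients which is a Macaulay representation, and adding a new
last vertex to the complement applies the Macaulay operator to it. So the Macaulay bound says
exactly that the segments satisfy the above requirement.
-/

/-! ### Arithmetic of the Macaulay operator -/

theorem macUp_zero_right (t : ℕ) : macUp t 0 = 0 := by
  cases t <;> simp only [macUp]

theorem exists_choose_add_two_add (t a : ℕ) :
    ∃ b r : ℕ, r < (b + 1).choose (t + 1) ∧ a = (b + 1).choose (t + 2) + r := by
  induction a with
  | zero => exact ⟨t, 0, by simp, by simp⟩
  | succ a ih =>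
    obtain ⟨b, r, hr, rfl⟩ := ih
    rcases Nat.succ_le_iff.mpr hr |>.lt_or_eq with h | h
    · exact ⟨b, r + 1, h, rfl⟩
    · refine ⟨b + 1, 0, (Nat.zero_lt_of_lt hr).trans_le (Nat.choose_mono _ (b + 1).le_succ), ?_⟩
      have pascal : (b + 1 + 1).choose (t + 2) =
          (b + 1).choose (t + 1) + (b + 1).choose (t + 2) :=
        Nat.choose_succ_succ' (b + 1) (t + 1)
      omega

theorem sSup_choose_le_eq {t c r : ℕ} (hr : r < c.choose t) :
    sSup {x : ℕ | x.choose (t + 1) ≤ c.choose (t + 1) + r} = c := by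
  refine IsGreatest.csSup_eq ⟨Nat.le_add_right _ _, fun x hx => ?_⟩
  by_contra! hcx
  have hle : (c + 1).choose (t + 1) ≤ x.choose (t + 1) := Nat.choose_mono _ hcx
  rw [Nat.choose_succ_succ'] at hle
  have hx' : x.choose (t + 1) ≤ c.choose (t + 1) + r := hx
  omega

theorem macUp_choose_add_of_lt {t c r : ℕ} (hr : r < c.choose t) :
    macUp (t + 1) (c.choose (t + 1) + r) = (c + 1).choose (t + 2) + macUp t r := by
  rcases Nat.eq_zero_or_pos (c.choose (t + 1) + r) with h0 | h0
  · obtain ⟨hc, rfl⟩ := Nat.add_eq_zero_iff.mp h0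
    have hct : c < t + 1 := Nat.choose_eq_zero_iff.mp hc
    rw [h0, macUp_zero_right, macUp_zero_right, Nat.choose_eq_zero_of_lt (by omega)]
  · obtain ⟨a, ha⟩ := Nat.exists_eq_add_of_le' h0
    simp only [ha, macUp]
    rw [← ha, sSup_choose_le_eq hr, Nat.add_sub_cancel_left]

theorem macUp_choose (t c : ℕ) :
    macUp (t + 1) (c.choose (t + 1)) = (c + 1).choose (t + 2) := by
  rcases Nat.lt_or_ge c t with hct | htc
  · rw [Nat.choose_eq_zero_of_lt (by omega), macUp_zero_right, Nat.choose_eq_zero_of_lt (by omega)]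
  · simpa only [macUp_zero_right, add_zero] using macUp_choose_add_of_lt (Nat.choose_pos htc)

theorem macUp_choose_add_of_le {t c r : ℕ} (hr : r ≤ c.choose (t + 1)) :
    macUp (t + 2) (c.choose (t + 2) + r) = (c + 1).choose (t + 3) + macUp (t + 1) r := by
  rcases hr.lt_or_eq with hlt | rfl
  · exact macUp_choose_add_of_lt hlt
  · have pascal : c.choose (t + 2) + c.choose (t + 1) = (c + 1).choose (t + 2) :=
      (add_comm _ _).trans (Nat.choose_succ_succ' c (t + 1)).symm
    have pascal' : (c + 2).choose (t + 3) = (c + 1).choose (t + 2) + (c + 1).choose (t + 3) :=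
      Nat.choose_succ_succ' (c + 1) (t + 2)
    rw [pascal, macUp_choose, macUp_choose, pascal', add_comm]

theorem macUp_one (a : ℕ) : macUp 1 a = (a + 1).choose 2 := by
  simpa only [zero_add, Nat.choose_one_right] using macUp_choose 0 a

theorem macUp_strictMono (t : ℕ) : StrictMono (macUp (t + 1)) := by
  induction t with
  | zero =>
    refine strictMono_nat_of_lt_succ fun a => ?_
    have pascal : (a + 2).choose 2 = (a + 1).choose 1 + (a + 1).choose 2 :=
      Nat.choose_succ_succ' (a + 1) 1
    rw [zero_add, macUp_one, macUp_one, pascal, Nat.choose_one_right]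
    omega
  | succ t ih =>
    refine strictMono_nat_of_lt_succ fun a => ?_
    obtain ⟨b, r, hr, rfl⟩ := exists_choose_add_two_add t a
    have hsucc : macUp (t + 2) ((b + 1).choose (t + 2) + r + 1) =
        (b + 2).choose (t + 3) + macUp (t + 1) (r + 1) := macUp_choose_add_of_le hr
    rw [hsucc, macUp_choose_add_of_lt hr]
    exact Nat.add_lt_add_left (ih r.lt_succ_self) _

theorem le_choose_of_add_macUp_le {t c r y : ℕ} (hr : r ≤ (c + 1).choose (t + 1))
    (h : r + macUp (t + 1) y ≤ macUp (t + 1) r) : y ≤ c.choose (t + 1) := by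
  obtain ⟨j, hj⟩ := Nat.exists_eq_add_of_le' hr
  have hgrow : j + macUp (t + 1) r ≤ macUp (t + 1) (j + r) :=
    (macUp_strictMono t).add_le_nat j r
  have pascal : (c + 2).choose (t + 2) = (c + 1).choose (t + 1) + (c + 1).choose (t + 2) :=
    Nat.choose_succ_succ' (c + 1) (t + 1)
  rw [← hj, macUp_choose, pascal] at hgrow
  rw [← (macUp_strictMono t).le_iff_le, macUp_choose]
  omega

theorem add_le_macUp_of_choose_add_le {t b x y : ℕ} (hr : x + y < (b + 1).choose (t + 2))
    (h : b.choose (t + 2) + x + (b.choose (t + 3) + y) ≤ macUp (t + 2) (b.choose (t + 2) + x)) :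
    x + y ≤ macUp (t + 1) x := by
  rcases Nat.le_total x (b.choose (t + 1)) with hle | hge
  · have pascal : (b + 1).choose (t + 3) = b.choose (t + 2) + b.choose (t + 3) :=
      Nat.choose_succ_succ' b (t + 2)
    rw [macUp_choose_add_of_le hle] at h
    omega
  · calc x + y ≤ (b + 1).choose (t + 2) := hr.le
      _ = macUp (t + 1) (b.choose (t + 1)) := (macUp_choose t b).symm
      _ ≤ macUp (t + 1) x := (macUp_strictMono t).monotone hge

theorem add_macUp_le_macUp_choose_add {t b r y : ℕ} (hr : r < (b + 1).choose (t + 1))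
    (h : r + macUp (t + 2) y ≤ (b + 1).choose (t + 3) + macUp (t + 1) r) :
    (b + 1).choose (t + 2) + r + macUp (t + 2) y ≤
      macUp (t + 2) ((b + 1).choose (t + 2) + r) := by
  have pascal : (b + 2).choose (t + 3) = (b + 1).choose (t + 2) + (b + 1).choose (t + 3) :=
    Nat.choose_succ_succ' (b + 1) (t + 2)
  have hup : macUp (t + 2) ((b + 1).choose (t + 2) + r) =
      (b + 2).choose (t + 3) + macUp (t + 1) r := macUp_choose_add_of_lt hr
  omega

/- In the application `x` and `y` count the members of a shifted family that avoid, respectively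
contain, the largest vertex. The hypothesis `h0` is what `x + y ≤ x^{⟨t⟩}` should say at `t = 0`,
where `x^{⟨0⟩}` is to be read as `∞` for `0 < x`. -/
theorem add_macUp_le_macUp_add {t x y : ℕ} (h0 : x = 0 → y = 0)
    (h : 0 < t → x + y ≤ macUp t x) :
    x + y + macUp (t + 1) y ≤ macUp (t + 1) (x + y) := by
  induction t generalizing x y with
  | zero =>
    rcases Nat.eq_zero_or_pos x with rfl | hx
    · simp [h0 rfl, macUp_zero_right]
    · have hmono : (y + 1).choose 2 ≤ (x + y).choose 2 := Nat.choose_mono 2 (by omega)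
      have pascal : (x + y + 1).choose 2 = (x + y).choose 1 + (x + y).choose 2 :=
        Nat.choose_succ_succ' (x + y) 1
      rw [zero_add, macUp_one, macUp_one, pascal, Nat.choose_one_right]
      omega
  | succ t ih =>
    obtain ⟨b, r, hr, ha⟩ := exists_choose_add_two_add t (x + y)
    have pascal : (b + 1).choose (t + 2) = b.choose (t + 1) + b.choose (t + 2) :=
      Nat.choose_succ_succ' b (t + 1)
    have hxy : x + y ≤ macUp (t + 1) x := h t.succ_pos
    have hx : b.choose (t + 1) ≤ x := by
      rw [← (macUp_strictMono t).le_iff_le, macUp_choose]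
      omega
    obtain ⟨x, rfl⟩ := Nat.exists_eq_add_of_le hx
    suffices r + macUp (t + 2) y ≤ (b + 1).choose (t + 3) + macUp (t + 1) r by
      rw [ha]
      exact add_macUp_le_macUp_choose_add hr this
    rcases Nat.lt_or_ge x r with hxr | hrx
    · obtain ⟨y, rfl⟩ := Nat.exists_eq_add_of_le (show b.choose (t + 2) ≤ y by omega)
      obtain rfl : r = x + y := by omega
      have hrec : x + y + macUp (t + 1) y ≤ macUp (t + 1) (x + y) := by
        refine ih ?_ fun ht => ?_
        · rintro rfl
          rw [add_zero, macUp_choose] at hxy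
          omega
        · obtain ⟨s, rfl⟩ := Nat.exists_eq_add_of_le' ht
          exact add_le_macUp_of_choose_add_le hr hxy
      rw [macUp_choose_add_of_le (le_choose_of_add_macUp_le hr.le hrec)]
      omega
    · have hy : macUp (t + 2) y ≤ macUp (t + 2) (b.choose (t + 2)) :=
        (macUp_strictMono (t + 1)).monotone (by omega)
      have hchoose : macUp (t + 2) (b.choose (t + 2)) = (b + 1).choose (t + 3) :=
        macUp_choose (t + 1) b
      have hle := (macUp_strictMono t).le_apply (x := r)
      omega

/-! ### Shifted families -/

section ShiftedFamilies

open Finset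

variable {G A A' : Finset (Finset ℕ)} {M e t : ℕ}

/-- A shifted family of finite sets: replacing an element of a member by a smaller one gives a
member. These are the supports of the monomials of a squarefree strongly stable set. -/
def IsShifted (G : Finset (Finset ℕ)) : Prop :=
  ∀ S ∈ G, ∀ p q, p < q → q ∈ S → p ∉ S → insert p (S.erase q) ∈ G

protected theorem IsShifted.nonMemberSubfamily (hA : IsShifted A) (M : ℕ)
    (hAM : ∀ S ∈ A, S ⊆ range (M + 1)) : IsShifted (A.nonMemberSubfamily M) := by
  intro S hS p q hpq hq hp
  rw [mem_nonMemberSubfamily] at hS ⊢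
  have hqM := hAM S hS.1 hq
  grind [hA S hS.1 p q hpq hq hp]

protected theorem IsShifted.memberSubfamily (hA : IsShifted A) (M : ℕ)
    (hAM : ∀ S ∈ A, S ⊆ range (M + 1)) : IsShifted (A.memberSubfamily M) := by
  intro S hS p q hpq hq hp
  rw [mem_memberSubfamily] at hS ⊢
  have hqM : q ∈ range (M + 1) := hAM _ hS.1 (mem_insert_of_mem hq)
  have hshift := hA _ hS.1 p q hpq (mem_insert_of_mem hq) (by grind)
  have hset : insert p ((insert M S).erase q) = insert M (insert p (S.erase q)) := by grind
  rw [← hset]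
  grind

theorem nonMemberSubfamily_subset_powersetCard (hA : A ⊆ powersetCard e (range (M + 1))) :
    A.nonMemberSubfamily M ⊆ powersetCard e (range M) := by
  intro S hS
  rw [mem_nonMemberSubfamily] at hS
  have hS' := mem_powersetCard.mp (hA hS.1)
  exact mem_powersetCard.mpr ⟨by grind, hS'.2⟩

theorem memberSubfamily_subset_powersetCard (hA : A ⊆ powersetCard (e + 1) (range (M + 1))) :
    A.memberSubfamily M ⊆ powersetCard e (range M) := by
  intro S hS
  rw [mem_memberSubfamily] at hS
  have hS' := mem_powersetCard.mp (hA hS.1)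
  rw [card_insert_of_notMem hS.2, range_add_one, insert_subset_insert_iff hS.2] at hS'
  exact mem_powersetCard.mpr ⟨hS'.1, Nat.succ_injective hS'.2⟩

theorem IsShifted.range_card_mem (hG : IsShifted G) {S : Finset ℕ} (hS : S ∈ G) :
    range #S ∈ G := by
  induction h : #(S \ range #S) generalizing S with
  | zero =>
    rw [card_eq_zero, sdiff_eq_empty_iff_subset] at h
    rwa [← eq_of_subset_of_card_le h (by simp)]
  | succ m ih =>
    obtain ⟨q, hq⟩ : (S \ range #S).Nonempty := card_pos.mp (by omega)
    obtain ⟨p, hp⟩ : (range #S \ S).Nonempty := by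
      rw [← card_pos, ← card_sdiff_comm (card_range #S).symm]
      omega
    simp only [mem_sdiff, mem_range, not_lt] at hp hq
    have hcard : #(insert p (S.erase q)) = #S := by
      rw [card_insert_of_notMem (by grind), card_erase_add_one hq.1]
    have hdiff : insert p (S.erase q) \ range #S = (S \ range #S).erase q := by
      rw [insert_sdiff_of_mem _ (mem_range.mpr hp.1), erase_sdiff_comm]
    rw [← hcard]
    refine ih (hG S hS p q (by omega) hq.1 hp.2) ?_
    rw [hcard, hdiff, card_erase_of_mem (by grind), h, Nat.add_sub_cancel]

theorem IsShifted.nonMemberSubfamily_memberSubfamily_subset (hA' : IsShifted A')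
    (hAA' : A'.nonMemberSubfamily (M + 1) ⊆ A) :
    (A'.memberSubfamily (M + 1)).nonMemberSubfamily M ⊆ A.memberSubfamily M := by
  intro S hS
  simp only [mem_nonMemberSubfamily, mem_memberSubfamily] at hS
  obtain ⟨⟨hSA', hMS'⟩, hMS⟩ := hS
  have hshift : insert M ((insert (M + 1) S).erase (M + 1)) ∈ A' :=
    hA' _ hSA' M (M + 1) M.lt_succ_self (mem_insert_self _ _) (by grind)
  rw [erase_insert hMS'] at hshift
  exact mem_memberSubfamily.mpr ⟨hAA' (mem_nonMemberSubfamily.mpr ⟨hshift, by grind⟩), hMS⟩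

theorem IsShifted.memberSubfamily_eq_empty (hA : IsShifted A)
    (hAM : A ⊆ powersetCard e (range (M + 1))) (he : e ≤ M)
    (h : A.nonMemberSubfamily M = ∅) : A.memberSubfamily M = ∅ := by
  contrapose! h
  obtain ⟨S, hS⟩ := h
  have hSA := (mem_memberSubfamily.mp hS).1
  have hrange : range e ∈ A := (mem_powersetCard.mp (hAM hSA)).2 ▸ hA.range_card_mem hSA
  exact ⟨range e, mem_nonMemberSubfamily.mpr ⟨hrange, by simpa using he⟩⟩

/- Splitting both families by their largest possible vertex reduces the bound to the bounds for the
two halves, and `add_macUp_le_macUp_add` puts these together. -/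
theorem IsShifted.card_le_macUp_card (hA : IsShifted A) (hA' : IsShifted A')
    (hAM : A ⊆ powersetCard e (range M)) (hAM' : A' ⊆ powersetCard e (range (M + 1)))
    (hAA' : A'.nonMemberSubfamily M ⊆ A) (ht : 0 < t) (hM : t + e = M) :
    #A' ≤ macUp t #A := by
  induction M generalizing A A' e t with
  | zero => omega
  | succ M ih =>
    obtain ⟨t, rfl⟩ : ∃ s, t = s + 1 := Nat.exists_eq_add_of_le' ht
    have hsub : ∀ S ∈ A, S ⊆ range (M + 1) := fun S hS => (mem_powersetCard.mp (hAM hS)).1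
    have hsub' : ∀ S ∈ A', S ⊆ range (M + 2) := fun S hS => (mem_powersetCard.mp (hAM' hS)).1
    have hcard := card_memberSubfamily_add_card_nonMemberSubfamily M A
    have hcard' := card_memberSubfamily_add_card_nonMemberSubfamily (M + 1) A'
    have hdel' : #(A'.nonMemberSubfamily (M + 1)) ≤ #A := card_le_card hAA'
    cases e with
    | zero =>
      have hlink' : A'.memberSubfamily (M + 1) = ∅ := by
        refine eq_empty_of_forall_notMem fun S hS => insert_ne_empty (M + 1) S ?_
        exact card_eq_zero.mp (mem_powersetCard.mp (hAM' (mem_memberSubfamily.mp hS).1)).2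
      have hle : #A ≤ macUp (t + 1) #A := (macUp_strictMono t).le_apply
      rw [hlink', card_empty] at hcard'
      omega
    | succ e =>
      have hlink' : #(A'.memberSubfamily (M + 1)) ≤ macUp (t + 1) #(A.memberSubfamily M) :=
        ih (hA.memberSubfamily M hsub) (hA'.memberSubfamily _ hsub')
          (memberSubfamily_subset_powersetCard hAM) (memberSubfamily_subset_powersetCard hAM')
          (hA'.nonMemberSubfamily_memberSubfamily_subset hAA') t.succ_pos (by omega)
      have hdel : 0 < t → #A ≤ macUp t #(A.nonMemberSubfamily M) := fun ht =>
        ih (hA.nonMemberSubfamily M hsub) hA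
          (nonMemberSubfamily_subset_powersetCard hAM) hAM Subset.rfl ht (by omega)
      have hadd : #A + macUp (t + 1) #(A.memberSubfamily M) ≤ macUp (t + 1) #A := by
        rw [← hcard, add_comm #(A.memberSubfamily M)] at hdel ⊢
        refine add_macUp_le_macUp_add (fun h => ?_) hdel
        rw [card_eq_zero] at h ⊢
        exact hA.memberSubfamily_eq_empty hAM (by omega) h
      omega

/-- The sets `S \ {max S}` for the members `S` of `G` with `max S = m`. -/
def topLink (G : Finset (Finset ℕ)) (m : ℕ) : Finset (Finset ℕ) :=
  {T ∈ (range m).powerset | insert m T ∈ G}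

theorem mem_topLink {m : ℕ} {T : Finset ℕ} : T ∈ topLink G m ↔ T ⊆ range m ∧ insert m T ∈ G := by
  rw [topLink, mem_filter, mem_powerset]

theorem topLink_subset_powersetCard {N : ℕ} (hG : G ⊆ powersetCard (e + 1) (range N)) (m : ℕ) :
    topLink G m ⊆ powersetCard e (range m) := by
  intro T hT
  obtain ⟨hTm, hTG⟩ := mem_topLink.mp hT
  have hcard := (mem_powersetCard.mp (hG hTG)).2
  rw [card_insert_of_notMem (fun hm => by simpa using hTm hm)] at hcard
  exact mem_powersetCard.mpr ⟨hTm, Nat.succ_injective hcard⟩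

protected theorem IsShifted.topLink (hG : IsShifted G) (m : ℕ) : IsShifted (topLink G m) := by
  intro T hT p q hpq hq hp
  obtain ⟨hTm, hTG⟩ := mem_topLink.mp hT
  have hqm : q < m := mem_range.mp (hTm hq)
  refine mem_topLink.mpr ⟨by grind, ?_⟩
  have hset : insert p ((insert m T).erase q) = insert m (insert p (T.erase q)) := by grind
  exact hset ▸ hG _ hTG p q hpq (mem_insert_of_mem hq) (by grind)

theorem IsShifted.nonMemberSubfamily_topLink_subset (hG : IsShifted G) (m : ℕ) :
    (topLink G (m + 1)).nonMemberSubfamily m ⊆ topLink G m := by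
  intro T hT
  obtain ⟨hT, hmT⟩ := mem_nonMemberSubfamily.mp hT
  obtain ⟨hTm, hTG⟩ := mem_topLink.mp hT
  refine mem_topLink.mpr ⟨by grind, ?_⟩
  have hmT' : m + 1 ∉ T := fun h => by simpa using hTm h
  simpa only [erase_insert hmT'] using
    hG _ hTG m (m + 1) m.lt_succ_self (mem_insert_self _ _) (by grind)

theorem card_topLink_le {N : ℕ} (hG : G ⊆ powersetCard (e + 1) (range N)) (m : ℕ) :
    #(topLink G m) ≤ m.choose e := by
  simpa using card_le_card (topLink_subset_powersetCard hG m)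

theorem IsShifted.topLink_eq_singleton {N : ℕ} (hG : IsShifted G)
    (hGN : G ⊆ powersetCard (e + 1) (range N)) (hne : G.Nonempty) : topLink G e = {range e} := by
  obtain ⟨S, hS⟩ := hne
  have hrange : range (e + 1) ∈ G := (mem_powersetCard.mp (hGN hS)).2 ▸ hG.range_card_mem hS
  refine Subset.antisymm ?_ (singleton_subset_iff.mpr (mem_topLink.mpr ⟨Subset.rfl, ?_⟩))
  · refine (topLink_subset_powersetCard hGN e).trans ?_
    simpa only [card_range] using (powersetCard_self (range e)).le
  · rwa [← range_add_one]

theorem IsShifted.mVector_card_topLink {N : ℕ} (hG : IsShifted G)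
    (hGN : G ⊆ powersetCard (e + 1) (range N)) (hne : G.Nonempty) :
    MVector fun k : Fin n => #(topLink G (k + e)) := by
  refine ⟨fun _ => ?_, fun t ht _ _ => ?_⟩
  · beta_reduce
    rw [Nat.zero_add, hG.topLink_eq_singleton hGN hne, card_singleton]
  · have hlink (m : ℕ) := topLink_subset_powersetCard hGN m
    refine (hG.topLink (t + e)).card_le_macUp_card
      (hG.topLink (t + 1 + e)) (hlink _) ?_ ?_ ht rfl
    · rw [Nat.add_right_comm]
      exact hlink _
    · rw [Nat.add_right_comm]
      exact hG.nonMemberSubfamily_topLink_subset _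

theorem isShifted_of_adjacent
    (h : ∀ S ∈ G, ∀ p, p + 1 ∈ S → p ∉ S → insert p (S.erase (p + 1)) ∈ G) : IsShifted G := by
  intro S hS p q hpq hq hp
  induction q, hpq using Nat.le_induction generalizing S with
  | base => exact h S hS p hq hp
  | succ r hpr ih =>
    change p < r at hpr
    by_cases hr : r ∈ S
    · have hset : insert r ((insert p (S.erase r)).erase (r + 1)) = insert p (S.erase (r + 1)) := by
        rw [erase_insert_of_ne (by omega), insert_comm, erase_right_comm,
          insert_erase (mem_erase.mpr ⟨by omega, hr⟩)]
      exact hset ▸ h _ (ih S hS hr hp) r (by grind) (by grind)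
    · have hset : insert p ((insert r (S.erase (r + 1))).erase r) = insert p (S.erase (r + 1)) := by
        rw [erase_insert fun h => hr (mem_of_mem_erase h)]
      exact hset ▸ ih _ (h S hS r hq hr) (by grind) (by grind)

section OfTopLinks

variable {A : Fin n → Finset (Finset ℕ)}

/-- The family of all `T ∪ {k + e}` with `T ∈ A k`; it has the top links `A k` if the members of
`A k` lie in `range (k + e)`. -/
def ofTopLinks (e : ℕ) (A : Fin n → Finset (Finset ℕ)) : Finset (Finset ℕ) :=
  univ.biUnion fun k => (A k).image (insert (k + e))

theorem mem_ofTopLinks {S : Finset ℕ} :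
    S ∈ ofTopLinks e A ↔ ∃ k, ∃ T ∈ A k, insert (k + e : ℕ) T = S := by
  simp only [ofTopLinks, mem_biUnion, mem_univ, true_and, mem_image]

theorem ofTopLinks_subset_powersetCard (hA : ∀ k, A k ⊆ powersetCard e (range (k + e))) :
    ofTopLinks e A ⊆ powersetCard (e + 1) (range (n + e)) := by
  intro S hS
  obtain ⟨k, T, hT, rfl⟩ := mem_ofTopLinks.mp hS
  obtain ⟨hTk, hcard⟩ := mem_powersetCard.mp (hA k hT)
  refine mem_powersetCard.mpr ⟨by grind, ?_⟩
  rw [card_insert_of_notMem fun h => by simpa using hTk h, hcard]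

theorem topLink_ofTopLinks (hA : ∀ k, A k ⊆ powersetCard e (range (k + e))) (k : Fin n) :
    topLink (ofTopLinks e A) (k + e) = A k := by
  have hlt {k : Fin n} {T : Finset ℕ} (hT : T ∈ A k) : ∀ x ∈ T, x < k + e := fun x hx =>
    mem_range.mp ((mem_powersetCard.mp (hA k hT)).1 hx)
  ext T
  rw [mem_topLink, mem_ofTopLinks]
  refine ⟨?_, fun hT => ⟨by grind, k, T, hT, rfl⟩⟩
  rintro ⟨hTk, j, T', hT', hins⟩
  have hj : (j + e : ℕ) ∈ insert (k + e : ℕ) T := hins ▸ mem_insert_self _ _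
  have hk : (k + e : ℕ) ∈ insert (j + e : ℕ) T' := hins ▸ mem_insert_self _ _
  obtain rfl : j = k := Fin.ext (by grind)
  have hTT' : T' = T := by
    rw [← erase_insert fun h => (hlt hT' _ h).false, hins,
      erase_insert fun h => by simpa using hTk h]
  exact hTT' ▸ hT'

theorem isShifted_ofTopLinks (hA : ∀ k, A k ⊆ powersetCard e (range (k + e)))
    (hshift : ∀ k, IsShifted (A k))
    (htower : ∀ (t : ℕ) (h : t + 1 < n),
      (A ⟨t + 1, h⟩).nonMemberSubfamily (t + e) ⊆ A ⟨t, t.lt_succ_self.trans h⟩) :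
    IsShifted (ofTopLinks e A) := by
  refine isShifted_of_adjacent fun S hS p hp1 hp => ?_
  obtain ⟨k, T, hT, rfl⟩ := mem_ofTopLinks.mp hS
  obtain ⟨hTk, hcard⟩ := mem_powersetCard.mp (hA k hT)
  rcases mem_insert.mp hp1 with hpk | hpT
  · obtain ⟨_ | t, hk⟩ := k
    · have hTe : T = range e := eq_of_subset_of_card_le (by simpa using hTk) (by simp [hcard])
      grind
    · obtain rfl : p = t + e := by grind
      have hdel : T ∈ (A ⟨t + 1, hk⟩).nonMemberSubfamily (t + e) :=
        mem_nonMemberSubfamily.mpr ⟨hT, by grind⟩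
      exact mem_ofTopLinks.mpr ⟨⟨t, by omega⟩, T, htower t hk hdel, by grind⟩
  · have hmove := hshift k T hT p (p + 1) p.lt_succ_self hpT (by grind)
    exact mem_ofTopLinks.mpr ⟨k, _, hmove, by grind⟩

end OfTopLinks

end ShiftedFamilies

/-! ### Lexicographic segments -/

section LexSegments

open Finset

variable {R : Finset ℕ} {M e x k a : ℕ}

/-- The position, counted from `0` in the lexicographic order, of `range M \ R` among the subsets
of `range M` of its size. The summands are the terms of the Macaulay representation of this
position. -/
def gapRank (M : ℕ) (R : Finset ℕ) : ℕ :=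
  ∑ x ∈ R, (M - (x + 1)).choose #{y ∈ R | x ≤ y}

theorem gapRank_insert (hx : ∀ y ∈ R, x < y) :
    gapRank M (insert x R) = (M - (x + 1)).choose (#R + 1) + gapRank M R := by
  have hxR : x ∉ R := fun h => (hx x h).false
  have hfilter : {y ∈ insert x R | x ≤ y} = insert x R := by grind
  have hfilter' (z : ℕ) (hz : z ∈ R) : {y ∈ insert x R | z ≤ y} = {y ∈ R | z ≤ y} := by
    grind
  rw [gapRank, sum_insert hxR, hfilter, card_insert_of_notMem hxR, gapRank]
  exact congrArg _ (sum_congr rfl fun z hz => by rw [hfilter' z hz])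

theorem gapRank_lt_choose (hR : R ⊆ Ico x M) : gapRank M R < (M - x).choose #R := by
  induction R using Finset.induction_on_min generalizing x with
  | empty => simp [gapRank]
  | insert z R hz ih =>
    have hzM := mem_Ico.mp (hR (mem_insert_self z R))
    have hRz : R ⊆ Ico (z + 1) M := fun y hy =>
      mem_Ico.mpr ⟨hz y hy, (mem_Ico.mp (hR (mem_insert_of_mem hy))).2⟩
    rw [gapRank_insert hz, card_insert_of_notMem fun h => (hz z h).false]
    calc (M - (z + 1)).choose (#R + 1) + gapRank M R
        < (M - (z + 1)).choose (#R + 1) + (M - (z + 1)).choose #R := by gcongr; exact ih hRz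
      _ = (M - (z + 1) + 1).choose (#R + 1) := by rw [Nat.choose_succ_succ', add_comm]
      _ ≤ (M - x).choose (#R + 1) := Nat.choose_mono _ (by omega)

theorem gapRank_insert_top (hR : R ⊆ range M) :
    gapRank (M + 1) (insert M R) = macUp #R (gapRank M R) := by
  induction R using Finset.induction_on_min with
  | empty => simp [gapRank, macUp, filter_singleton]
  | insert x R hx ih =>
    have hxM : x < M := mem_range.mp (hR (mem_insert_self x R))
    have hRM : R ⊆ range M := (subset_insert x R).trans hR
    have hlt : gapRank M R < (M - (x + 1)).choose #R := gapRank_lt_choose (by grind)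
    have hMR : M ∉ R := fun h => by simpa using hRM h
    rw [insert_comm, gapRank_insert (by grind), card_insert_of_notMem hMR, ih hRM,
      gapRank_insert hx, card_insert_of_notMem fun h => (hx x h).false,
      macUp_choose_add_of_lt hlt]
    congr 2
    omega

theorem gapRank_insert_erase_lt {p q : ℕ} (hR : R ⊆ range M) (hp : p ∈ R) (hq : q ∉ R)
    (hpq : p < q) (hqM : q < M) : gapRank M (insert q (R.erase p)) < gapRank M R := by
  induction R using Finset.induction_on_min with
  | empty => exact absurd hp (notMem_empty p)
  | insert x R hx ih =>
    have hxR : x ∉ R := fun h => (hx x h).false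
    rw [gapRank_insert hx]
    rcases mem_insert.mp hp with rfl | hpR
    · have hlt : gapRank M (insert q R) < (M - (p + 1)).choose #(insert q R) :=
        gapRank_lt_choose (by grind)
      rw [card_insert_of_notMem (by grind)] at hlt
      rw [erase_insert hxR]
      omega
    · have hset : insert q ((insert x R).erase p) = insert x (insert q (R.erase p)) := by grind
      have hcard : #(insert q (R.erase p)) = #R := by
        rw [card_insert_of_notMem (by grind), card_erase_add_one hpR]
      rw [hset, gapRank_insert (by grind), hcard]
      gcongr
      exact ih (by grind) hpR (by grind)

theorem exists_gapRank_eq {c : ℕ} (hc : c ≤ M) (ha : a < c.choose k) :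
    ∃ R ∈ powersetCard k (Ico (M - c) M), gapRank M R = a := by
  induction c generalizing k a with
  | zero =>
    obtain rfl : k = 0 := by
      by_contra hk
      rw [Nat.choose_eq_zero_of_lt (Nat.pos_of_ne_zero hk)] at ha
      exact Nat.not_lt_zero a ha
    exact ⟨∅, by simp, by simpa [gapRank, eq_comm] using ha⟩
  | succ c ih =>
    rcases lt_or_ge a (c.choose k) with hlt | hge
    · obtain ⟨R, hR, rfl⟩ := ih (by omega) hlt
      exact ⟨R, powersetCard_mono (Ico_subset_Ico_left (by omega)) hR, rfl⟩
    · obtain _ | k := k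
      · rw [Nat.choose_zero_right] at ha hge
        omega
      · obtain ⟨r, rfl⟩ := Nat.exists_eq_add_of_le hge
        rw [Nat.choose_succ_succ'] at ha
        obtain ⟨R, hR, rfl⟩ := ih (by omega) (show r < c.choose k by omega)
        obtain ⟨hRM, hcard⟩ := mem_powersetCard.mp hR
        have hlt : ∀ y ∈ R, M - (c + 1) < y := fun y hy => by
          have hy := mem_Ico.mp (hRM hy)
          omega
        refine ⟨insert (M - (c + 1)) R, mem_powersetCard.mpr ⟨by grind, ?_⟩, ?_⟩
        · rw [card_insert_of_notMem fun h => (hlt _ h).false, hcard]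
        · rw [gapRank_insert hlt, hcard]
          congr 2
          omega

theorem image_gapRank (M k : ℕ) :
    (powersetCard k (range M)).image (gapRank M) = range (M.choose k) := by
  ext a
  rw [mem_image, mem_range]
  constructor
  · rintro ⟨R, hR, rfl⟩
    obtain ⟨hRM, rfl⟩ := mem_powersetCard.mp hR
    simpa only [Nat.sub_zero] using gapRank_lt_choose (x := 0) (range_eq_Ico M ▸ hRM)
  · intro ha
    simpa only [Nat.sub_self, ← range_eq_Ico] using exists_gapRank_eq le_rfl ha

theorem card_filter_gapRank_lt (ha : a ≤ M.choose k) :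
    #{R ∈ powersetCard k (range M) | gapRank M R < a} = a := by
  have hinj : Set.InjOn (gapRank M) (powersetCard k (range M)) := by
    rw [← card_image_iff, image_gapRank, card_range, card_powersetCard, card_range]
  have himage : ({R ∈ powersetCard k (range M) | gapRank M R < a}).image (gapRank M) =
      range a := by
    rw [← filter_image (p := (· < a)), image_gapRank]
    ext b
    simp only [mem_filter, mem_range]
    omega
  rw [← card_image_of_injOn (hinj.mono (filter_subset _ _)), himage, card_range]

/-- The first `a` subsets of `range (k + e)` of size `e` in the lexicographic order. -/
def lexSegment (k e a : ℕ) : Finset (Finset ℕ) :=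
  {S ∈ powersetCard e (range (k + e)) | gapRank (k + e) (range (k + e) \ S) < a}

theorem mem_lexSegment {S : Finset ℕ} :
    S ∈ lexSegment k e a ↔
      S ∈ powersetCard e (range (k + e)) ∧ gapRank (k + e) (range (k + e) \ S) < a :=
  mem_filter

theorem card_lexSegment (ha : a ≤ (k + e).choose k) : #(lexSegment k e a) = a := by
  refine (card_nbij' (range (k + e) \ ·) (range (k + e) \ ·) ?_ ?_
    (fun S hS => Finset.sdiff_sdiff_eq_self (mem_powersetCard.mp (mem_lexSegment.mp hS).1).1)
    (fun R hR => Finset.sdiff_sdiff_eq_self (mem_powersetCard.mp (mem_filter.mp hR).1).1)).trans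
    (card_filter_gapRank_lt ha)
  · intro S hS
    obtain ⟨hS, hlt⟩ := mem_lexSegment.mp hS
    obtain ⟨hSM, hcard⟩ := mem_powersetCard.mp hS
    simp [card_sdiff_of_subset hSM, hcard, hlt]
  · intro R hR
    obtain ⟨hR, hlt⟩ := mem_filter.mp hR
    obtain ⟨hRM, hcard⟩ := mem_powersetCard.mp hR
    simp [mem_lexSegment, card_sdiff_of_subset hRM, hcard, Finset.sdiff_sdiff_eq_self hRM, hlt]

theorem isShifted_lexSegment (k e a : ℕ) : IsShifted (lexSegment k e a) := by
  intro S hS p q hpq hq hp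
  obtain ⟨hS, hlt⟩ := mem_lexSegment.mp hS
  obtain ⟨hSM, hcard⟩ := mem_powersetCard.mp hS
  have hqM : q < k + e := mem_range.mp (hSM hq)
  have hcompl : range (k + e) \ insert p (S.erase q) =
      insert q ((range (k + e) \ S).erase p) := by grind
  refine mem_lexSegment.mpr ⟨mem_powersetCard.mpr ⟨by grind, ?_⟩, ?_⟩
  · rw [card_insert_of_notMem (by grind), card_erase_add_one hq, hcard]
  · rw [hcompl]
    exact (gapRank_insert_erase_lt sdiff_subset (by grind) (by grind) hpq hqM).trans hlt

theorem nonMemberSubfamily_lexSegment_subset {a' : ℕ} (h0 : k = 0 → 0 < a)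
    (h : 0 < k → a' ≤ macUp k a) :
    (lexSegment (k + 1) e a').nonMemberSubfamily (k + e) ⊆ lexSegment k e a := by
  intro S hS
  obtain ⟨hS, hlast⟩ := mem_nonMemberSubfamily.mp hS
  obtain ⟨hS, hlt⟩ := mem_lexSegment.mp hS
  rw [Nat.add_right_comm] at hS hlt
  obtain ⟨hSM, hcard⟩ := mem_powersetCard.mp hS
  have hSM' : S ⊆ range (k + e) := by grind
  have hcompl : range (k + e + 1) \ S = insert (k + e) (range (k + e) \ S) := by grind
  have hcard' : #(range (k + e) \ S) = k := by
    rw [card_sdiff_of_subset hSM', card_range, hcard, Nat.add_sub_cancel]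
  refine mem_lexSegment.mpr ⟨mem_powersetCard.mpr ⟨hSM', hcard⟩, ?_⟩
  rw [hcompl, gapRank_insert_top sdiff_subset, hcard'] at hlt
  obtain _ | k := k
  · rw [card_eq_zero.mp hcard']
    simpa [gapRank] using h0
  · exact (macUp_strictMono k).lt_iff_lt.mp (hlt.trans_le (h k.succ_pos))

theorem MVector.le_choose {ℓ : Fin n → ℕ} (hℓ : MVector ℓ)
    (hℓ1 : ∀ h : 1 < n, ℓ ⟨1, h⟩ ≤ e + 1) (t : ℕ) (ht : t < n) :
    ℓ ⟨t, ht⟩ ≤ (t + e).choose t := by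
  induction t with
  | zero => simp [hℓ.1 ht]
  | succ t ih =>
    obtain _ | t := t
    · simpa [add_comm] using hℓ1 ht
    · have ht' : t + 1 < n := by omega
      calc ℓ ⟨t + 2, ht⟩ ≤ macUp (t + 1) (ℓ ⟨t + 1, ht'⟩) := hℓ.2 (t + 1) t.succ_pos ht' ht
        _ ≤ macUp (t + 1) ((t + 1 + e).choose (t + 1)) := (macUp_strictMono t).monotone (ih ht')
        _ = (t + 2 + e).choose (t + 2) := by rw [macUp_choose]; congr 1; omega

theorem MVector.exists_isShifted {ℓ : Fin n → ℕ} (hℓ : MVector ℓ)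
    (hℓ1 : ∀ h : 1 < n, ℓ ⟨1, h⟩ ≤ e + 1) :
    ∃ G ⊆ powersetCard (e + 1) (range (n + e)), IsShifted G ∧
      ∀ k : Fin n, #(topLink G (k + e)) = ℓ k := by
  let A (k : Fin n) : Finset (Finset ℕ) := lexSegment k e (ℓ k)
  have hA (k : Fin n) : A k ⊆ powersetCard e (range (k + e)) := filter_subset _ _
  refine ⟨ofTopLinks e A, ofTopLinks_subset_powersetCard hA,
    isShifted_ofTopLinks hA (fun k => isShifted_lexSegment k e (ℓ k)) fun t ht => ?_,
    fun k => ?_⟩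
  · refine nonMemberSubfamily_lexSegment_subset ?_ fun ht' => hℓ.2 t ht' _ ht
    rintro rfl
    simp [hℓ.1]
  · rw [topLink_ofTopLinks hA]
    exact card_lexSegment (hℓ.le_choose hℓ1 k k.isLt)

theorem exists_isShifted_card_topLink_iff (hn : 0 < n) {ℓ : Fin n → ℕ} :
    (∃ G ⊆ powersetCard (e + 1) (range (n + e)), G.Nonempty ∧ IsShifted G ∧
      ∀ k : Fin n, #(topLink G (k + e)) = ℓ k) ↔
    MVector ℓ ∧ ∀ h : 1 < n, ℓ ⟨1, h⟩ ≤ e + 1 := by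
  constructor
  · rintro ⟨G, hGN, hne, hG, hℓ⟩
    obtain rfl : (fun k : Fin n => #(topLink G (k + e))) = ℓ := funext hℓ
    refine ⟨hG.mVector_card_topLink hGN hne, fun h => ?_⟩
    simpa [add_comm 1 e] using card_topLink_le hGN (1 + e)
  · rintro ⟨hℓ, hℓ1⟩
    obtain ⟨G, hGN, hG, hcard⟩ := hℓ.exists_isShifted hℓ1
    have hlink : (topLink G (0 + e)).Nonempty := card_pos.mp
      ((hcard ⟨0, hn⟩).trans (hℓ.1 hn) ▸ Nat.one_pos)
    obtain ⟨T, hT⟩ := hlink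
    exact ⟨G, hGN, ⟨_, (mem_topLink.mp hT).2⟩, hG, hcard⟩

end LexSegments

/-! ### Squarefree monomials and finite sets -/

section Monomials

open Finset

variable {N m : ℕ} {S : Finset ℕ} {u v : Mono N}

/-- The support of a monomial, as the set of the indices, counted from `0`, of its variables. -/
def varSet (u : Mono N) : Finset ℕ := u.support.map Fin.valEmbedding

theorem mem_varSet {x : ℕ} : x ∈ varSet u ↔ ∃ i : Fin N, u i ≠ 0 ∧ (i : ℕ) = x := by
  simp [varSet]

theorem coe_mem_varSet {i : Fin N} : (i : ℕ) ∈ varSet u ↔ u i ≠ 0 := by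
  simp [varSet, Fin.val_inj]

theorem varSet_subset_range (u : Mono N) : varSet u ⊆ range N := by
  intro x hx
  obtain ⟨i, -, rfl⟩ := mem_varSet.mp hx
  exact mem_range.mpr i.isLt

/-- The squarefree monomial in `N` variables with support `S`; elements of `S` that are not less
than `N` are ignored. -/
noncomputable def setMono (N : ℕ) (S : Finset ℕ) : Mono N :=
  Finsupp.equivFunOnFinite.symm fun i => if (i : ℕ) ∈ S then 1 else 0

theorem setMono_apply {i : Fin N} : setMono N S i = if (i : ℕ) ∈ S then 1 else 0 := rfl

theorem sqFree_setMono (N : ℕ) (S : Finset ℕ) : SqFree (setMono N S) := by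
  intro i
  rw [setMono_apply]
  split_ifs <;> omega

theorem varSet_setMono (hS : S ⊆ range N) : varSet (setMono N S) = S := by
  ext x
  rw [mem_varSet]
  constructor
  · rintro ⟨i, hi, rfl⟩
    exact by_contra fun h => hi (if_neg h)
  · intro hx
    exact ⟨⟨x, mem_range.mp (hS hx)⟩, by simpa [setMono_apply] using hx, rfl⟩

theorem SqFree.setMono_varSet (hu : SqFree u) : setMono N (varSet u) = u := by
  ext i
  have hi := hu i
  rw [setMono_apply]
  split_ifs with h <;> rw [coe_mem_varSet] at h <;> omega

theorem SqFree.mdeg_eq_card_varSet (hu : SqFree u) : mdeg u = #(varSet u) := by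
  rw [varSet, card_map, card_eq_sum_ones]
  refine sum_congr rfl fun i hi => ?_
  exact le_antisymm (hu i) (Nat.one_le_iff_ne_zero.mpr (Finsupp.mem_support_iff.mp hi))

theorem maxVar_eq_succ_iff : maxVar u = m + 1 ↔ m ∈ varSet u ∧ ∀ x ∈ varSet u, x ≤ m := by
  have hsup : maxVar u = (varSet u).sup (· + 1) := by rw [varSet, sup_map]; rfl
  rw [hsup]
  constructor
  · intro h
    have hle (x) (hx : x ∈ varSet u) : x ≤ m :=
      Nat.succ_le_succ_iff.mp ((le_sup (f := (· + 1)) hx).trans h.le)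
    have hne : (varSet u).Nonempty := by
      by_contra hne
      rw [not_nonempty_iff_eq_empty.mp hne, sup_empty] at h
      exact Nat.succ_ne_zero m h.symm
    obtain ⟨x, hx, hxm⟩ := exists_mem_eq_sup _ hne (· + 1)
    exact ⟨by grind, hle⟩
  · rintro ⟨hm, hle⟩
    exact le_antisymm (Finset.sup_le fun x hx => Nat.succ_le_succ (hle x hx))
      (le_sup (f := (· + 1)) hm)

theorem card_filter_maxVar {G : Finset (Mono N)} (hG : ∀ u ∈ G, SqFree u) (m : ℕ) :
    #{u ∈ G | maxVar u = m + 1} = #(topLink (G.image varSet) m) := by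
  refine card_nbij (fun u => (varSet u).erase m) (fun u hu => ?_) (fun u hu v hv huv => ?_)
    fun T hT => ?_
  · obtain ⟨huG, hum⟩ := mem_filter.mp hu
    obtain ⟨hm, hle⟩ := maxVar_eq_succ_iff.mp hum
    refine mem_topLink.mpr ⟨by grind, ?_⟩
    rw [insert_erase hm]
    exact mem_image_of_mem _ huG
  · obtain ⟨huG, hum⟩ := mem_filter.mp hu
    obtain ⟨hvG, hvm⟩ := mem_filter.mp hv
    have herase : (varSet u).erase m = (varSet v).erase m := huv
    have hset : varSet u = varSet v := by
      rw [← insert_erase (maxVar_eq_succ_iff.mp hum).1, herase,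
        insert_erase (maxVar_eq_succ_iff.mp hvm).1]
    rw [← (hG u huG).setMono_varSet, hset, (hG v hvG).setMono_varSet]
  · obtain ⟨hTm, hTG⟩ := mem_topLink.mp hT
    obtain ⟨u, huG, hu⟩ := mem_image.mp hTG
    refine ⟨u, mem_filter.mpr ⟨huG, maxVar_eq_succ_iff.mpr ?_⟩, ?_⟩
    · rw [hu]
      exact ⟨mem_insert_self m T, by grind⟩
    · exact (congrArg (erase · m) hu).trans (erase_insert fun h => by simpa using hTm h)

theorem tsub_single_add_single_apply (u : Mono N) {p q : Fin N} (hpq : p ≠ q) (i : Fin N) :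
    (u - Finsupp.single q 1 + Finsupp.single p 1 : Mono N) i =
      if i = p then u p + 1 else if i = q then u q - 1 else u i := by
  rw [Finsupp.add_apply, Finsupp.tsub_apply, Finsupp.single_apply, Finsupp.single_apply]
  grind

theorem setMono_insert_erase {p q : Fin N} (hpq : p ≠ q) (hq : (q : ℕ) ∈ S) (hp : (p : ℕ) ∉ S) :
    setMono N (insert (p : ℕ) (S.erase q)) =
      setMono N S - Finsupp.single q 1 + Finsupp.single p 1 := by
  ext i
  rw [tsub_single_add_single_apply _ hpq]
  simp only [setMono_apply]
  grind

theorem eq_of_le_of_mdeg_le (h : v ≤ u) (hd : mdeg u ≤ mdeg v) : v = u := by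
  obtain ⟨w, rfl⟩ := exists_add_of_le h
  have hadd : mdeg (v + w) = mdeg v + w.degree := map_add Finsupp.degree v w
  have hw : w.degree = 0 := by omega
  rw [(Finsupp.degree_eq_zero_iff w).mp hw, add_zero]

end Monomials

/-! ### Squarefree strongly stable ideals and shifted families -/

section SquarefreeStable

open Finset

variable {N e : ℕ}

theorem minGen_iff_minimal {I : Ideal (MvPolynomial (Fin N) K)} {u : Mono N} :
    MinGen I u ↔ Minimal (fun v : Mono N => monomial v (1 : K) ∈ I) u := by
  simp only [MinGen, minimal_iff_forall_lt, lt_iff_le_and_ne, and_imp]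

theorem exists_minGen_le {I : Ideal (MvPolynomial (Fin N) K)} {u : Mono N}
    (hu : monomial u (1 : K) ∈ I) : ∃ v ≤ u, MinGen I v := by
  simp only [minGen_iff_minimal]
  exact exists_minimal_le_of_wellFoundedLT _ u hu

theorem exists_minGen {I : Ideal (MvPolynomial (Fin N) K)} (hI : MonomialIdeal I) (hne : I ≠ ⊥) :
    ∃ u, MinGen I u := by
  obtain ⟨f, hf, hf0⟩ := Submodule.exists_mem_ne_zero_of_ne_bot hne
  obtain ⟨m, hm⟩ := support_nonempty.mpr hf0
  obtain ⟨u, -, hu⟩ := exists_minGen_le (hI f hf m hm)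
  exact ⟨u, hu⟩

theorem image_varSet_subset_powersetCard {G : Finset (Mono N)} (hsq : ∀ u ∈ G, SqFree u)
    (hdeg : ∀ u ∈ G, mdeg u = e) : G.image varSet ⊆ powersetCard e (range N) := by
  refine image_subset_iff.mpr fun u hu => mem_powersetCard.mpr ⟨varSet_subset_range u, ?_⟩
  rw [← (hsq u hu).mdeg_eq_card_varSet, hdeg u hu]

theorem isShifted_image_varSet {I : Ideal (MvPolynomial (Fin N) K)} {G : Finset (Mono N)}
    (hI : SqSStableIdeal I) (hG : ∀ u, u ∈ G ↔ MinGen I u) (hdeg : ∀ u ∈ G, mdeg u = e) :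
    IsShifted (G.image varSet) := by
  intro S hS p q hpq hq hp
  obtain ⟨u, huG, rfl⟩ := mem_image.mp hS
  have hqN : q < N := mem_range.mp (varSet_subset_range u hq)
  lift q to Fin N using hqN
  lift p to Fin N using hpq.trans q.isLt
  have huI := (hG u).mp huG
  have husq := hI.1.2 u huI
  set T := insert (p : ℕ) ((varSet u).erase q) with hT
  have hTN : T ⊆ range N := by grind [varSet_subset_range u]
  have hmem : monomial (setMono N T) (1 : K) ∈ I := by
    rw [setMono_insert_erase (Fin.ne_of_lt hpq) hq hp, husq.setMono_varSet]
    refine hI.2 u husq huI.1 p q hpq ?_ (by simpa [coe_mem_varSet] using hp)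
    exact le_antisymm (husq q) (Nat.one_le_iff_ne_zero.mpr (coe_mem_varSet.mp hq))
  obtain ⟨v, hvT, hv⟩ := exists_minGen_le hmem
  have hvG := (hG v).mpr hv
  have hcard : mdeg (setMono N T) = mdeg v := by
    rw [hdeg v hvG, ← hdeg u huG, (sqFree_setMono N T).mdeg_eq_card_varSet, varSet_setMono hTN,
      husq.mdeg_eq_card_varSet, hT, card_insert_of_notMem (by grind), card_erase_add_one hq]
  refine mem_image.mpr ⟨v, hvG, ?_⟩
  rw [eq_of_le_of_mdeg_le hvT hcard.le, varSet_setMono hTN]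

variable (N K) in
/-- The ideal of `K[x_0, …, x_{N-1}]` generated by the squarefree monomials with supports in `G`. -/
noncomputable def setIdeal (G : Finset (Finset ℕ)) : Ideal (MvPolynomial (Fin N) K) :=
  Ideal.span ((fun u => monomial u (1 : K)) '' (setMono N '' (G : Set (Finset ℕ))))

variable {G : Finset (Finset ℕ)}

theorem monomial_mem_setIdeal {u : Mono N} :
    monomial u (1 : K) ∈ setIdeal K N G ↔ ∃ S ∈ G, setMono N S ≤ u := by
  classical
  rw [setIdeal, mem_ideal_span_monomial_image, support_monomial, if_neg one_ne_zero]
  simp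

theorem monomialIdeal_setIdeal (G : Finset (Finset ℕ)) : MonomialIdeal (setIdeal K N G) := by
  intro f hf m hm
  obtain ⟨v, ⟨S, hS, rfl⟩, hle⟩ := mem_ideal_span_monomial_image.mp hf m hm
  exact monomial_mem_setIdeal.mpr ⟨S, hS, hle⟩

theorem setIdeal_ne_bot (hG : G.Nonempty) : setIdeal K N G ≠ ⊥ := by
  obtain ⟨S, hS⟩ := hG
  refine (Submodule.ne_bot_iff _).mpr ⟨monomial (setMono N S) 1, ?_, ?_⟩
  · exact monomial_mem_setIdeal.mpr ⟨S, hS, le_rfl⟩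
  · exact monomial_eq_zero.not.mpr one_ne_zero

theorem mdeg_setMono {S : Finset ℕ} (hS : S ∈ powersetCard e (range N)) :
    mdeg (setMono N S) = e := by
  obtain ⟨hSN, hcard⟩ := mem_powersetCard.mp hS
  rw [(sqFree_setMono N S).mdeg_eq_card_varSet, varSet_setMono hSN, hcard]

theorem minGen_setIdeal_iff (hG : G ⊆ powersetCard e (range N)) {u : Mono N} :
    MinGen (setIdeal K N G) u ↔ u ∈ G.image (setMono N) := by
  rw [minGen_iff_minimal, mem_image]
  constructor
  · intro hu
    obtain ⟨S, hS, hle⟩ := monomial_mem_setIdeal.mp hu.prop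
    exact ⟨S, hS, hu.eq_of_le (monomial_mem_setIdeal.mpr ⟨S, hS, le_rfl⟩) hle⟩
  · rintro ⟨S, hS, rfl⟩
    refine ⟨monomial_mem_setIdeal.mpr ⟨S, hS, le_rfl⟩, fun v hv hvS => ?_⟩
    obtain ⟨T, hT, hle⟩ := monomial_mem_setIdeal.mp hv
    have hdeg : mdeg (setMono N S) ≤ mdeg (setMono N T) := by
      rw [mdeg_setMono (hG hS), mdeg_setMono (hG hT)]
    exact eq_of_le_of_mdeg_le (hle.trans hvS) hdeg ▸ hle

theorem sqSStableIdeal_setIdeal (hGN : G ⊆ powersetCard e (range N)) (hG : IsShifted G) :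
    SqSStableIdeal (setIdeal K N G) := by
  refine ⟨⟨monomialIdeal_setIdeal G, fun u hu => ?_⟩, fun u _ hu p q hpq _ hp => ?_⟩
  · obtain ⟨S, -, rfl⟩ := mem_image.mp ((minGen_setIdeal_iff hGN).mp hu)
    exact sqFree_setMono N S
  · obtain ⟨S, hS, hle⟩ := monomial_mem_setIdeal.mp hu
    have hpS : (p : ℕ) ∉ S := fun h => by
      simpa [setMono_apply, h, hp] using hle p
    rw [monomial_mem_setIdeal]
    by_cases hqS : (q : ℕ) ∈ S
    · refine ⟨_, hG S hS p q hpq hqS hpS, ?_⟩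
      rw [setMono_insert_erase hpq.ne hqS hpS]
      gcongr
    · refine ⟨S, hS, fun i => ?_⟩
      have hi := hle i
      rw [tsub_single_add_single_apply _ hpq.ne]
      rw [setMono_apply] at hi ⊢
      grind

variable (N K) in
theorem exists_sqSStableIdeal_iff {ℓ : Fin n → ℕ} :
    (∃ (I : Ideal (MvPolynomial (Fin N) K)) (G : Finset (Mono N)),
        I ≠ ⊥ ∧ SqSStableIdeal I ∧ (∀ u, u ∈ G ↔ MinGen I u) ∧ (∀ u ∈ G, mdeg u = e + 1) ∧
        ∀ k : Fin n, #{u ∈ G | maxVar u = (k : ℕ) + (e + 1)} = ℓ k) ↔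
      ∃ G ⊆ powersetCard (e + 1) (range N), G.Nonempty ∧ IsShifted G ∧
        ∀ k : Fin n, #(topLink G (k + e)) = ℓ k := by
  constructor
  · rintro ⟨I, G, hne, hI, hG, hdeg, hℓ⟩
    have hsq : ∀ u ∈ G, SqFree u := fun u hu => hI.1.2 u ((hG u).mp hu)
    obtain ⟨u, hu⟩ := exists_minGen hI.1.1 hne
    refine ⟨G.image varSet, image_varSet_subset_powersetCard hsq hdeg,
      ⟨_, mem_image_of_mem _ ((hG u).mpr hu)⟩, isShifted_image_varSet hI hG hdeg, fun k => ?_⟩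
    rw [← card_filter_maxVar hsq, ← hℓ k, add_assoc]
  · rintro ⟨G, hGN, hne, hG, hℓ⟩
    have hsq : ∀ u ∈ G.image (setMono N), SqFree u :=
      forall_mem_image.mpr fun S _ => sqFree_setMono N S
    have hvar : (G.image (setMono N)).image varSet = G := by
      rw [image_image]
      refine (image_congr fun S hS => ?_).trans image_id
      exact varSet_setMono (mem_powersetCard.mp (hGN hS)).1
    refine ⟨setIdeal K N G, G.image (setMono N), setIdeal_ne_bot hne,
      sqSStableIdeal_setIdeal hGN hG, fun u => (minGen_setIdeal_iff hGN).symm,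
      forall_mem_image.mpr fun S hS => mdeg_setMono (hGN hS), fun k => ?_⟩
    rw [← add_assoc, card_filter_maxVar hsq, hvar, hℓ k]

end SquarefreeStable

/-- characterization of `ℓ*`-sequences of nonzero squarefree strongly
stable ideals generated in degree `d`: exactly the M-vectors with `ℓ_2 ≤ d`. -/
theorem stmt18 (n d : ℕ) (hn : 0 < n) (hd : 0 < d) (K : Type) [Field K]
    (ℓ : Fin n → ℕ) :
    (∃ (I : Ideal (MvPolynomial (Fin (n + d - 1)) K)) (G : Finset (Mono (n + d - 1))),
        I ≠ ⊥ ∧ SqSStableIdeal I ∧ (∀ u, u ∈ G ↔ MinGen I u) ∧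
        (∀ u ∈ G, mdeg u = d) ∧
        ∀ k : Fin n, (G.filter fun u => maxVar u = (k : ℕ) + d).card = ℓ k) ↔
    (MVector ℓ ∧ ∀ h2 : 1 < n, ℓ ⟨1, h2⟩ ≤ d) := by
  obtain ⟨e, rfl⟩ := Nat.exists_eq_succ_of_ne_zero hd.ne'
  exact (exists_sqSStableIdeal_iff K (n + e)).trans (exists_isShifted_card_topLink_iff hn)

end Paper
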